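/- Let m ∈ ℕ with m ≥ 1, let p₁,…,p_m be minimal idempotent ultrafilters on ℕ, let A ∈ ⊗_{i=1}^m p_i, and let T ∈ 𝒫_f(ℙ). Then there exist functions α₁,…,α_m : 𝒫_f(ℕ^ℕ) → ℕ and H₁,…,H_m : 𝒫_f(ℕ^ℕ) → 𝒫_f(ℕ) such that (1) whenever G, K ∈ 𝒫_f(ℕ^ℕ) and G ⊊ K one has max H_j(G) < min H_j(K) for every j ∈ {1,…,m}, and (2) whenever G₁ ⊊ G₂ ⊊ ⋯ ⊊ G_n ⊊ ⋯ is an infinite strictly increasing chain in 𝒫_f(ℕ^ℕ), f_i ∈ G_i for each i ∈ ℕ, β₁ < β₂ < ⋯ < β_m are in 𝒫_f(ℕ), and P₁,…,P_m ∈ T, the tuple (Σ_{i∈β₁}α₁(G_i) + P₁(Σ_{i∈β₁}Σ_{t∈H₁(G_i)}f_i(t)), …, Σ_{i∈β_m}α_m(G_i) + P_m(Σ_{i∈β_m}Σ_{t∈H_m(G_i)}f_i(t))) belongs to A. -/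

import Mathlib

namespace MultiCST

/-- The sum `p + q` of ultrafilters on ℕ: `A ∈ p + q` iff `{x : {y : x+y ∈ A} ∈ q} ∈ p`. -/
def uAdd (p q : Ultrafilter ℕ) : Ultrafilter ℕ :=
  p.bind fun x => q.map fun y => x + y

/-- `A ⊆ ℕ` is a J-set. -/
def IsJSet (A : Set ℕ) : Prop :=
  ∀ F : Finset (ℕ → ℕ), F.Nonempty →
    ∃ (a : ℕ) (β : Finset ℕ), β.Nonempty ∧ ∀ f ∈ F, a + ∑ t ∈ β, f t ∈ A

/-- `p ∈ 𝒥`: every member of `p` is a J-set. -/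
def MemJ (p : Ultrafilter ℕ) : Prop := ∀ A : Set ℕ, A ∈ p → IsJSet A

/-- `p` is an idempotent ultrafilter. -/
def IdempotentUF (p : Ultrafilter ℕ) : Prop := uAdd p p = p

/-- `p` is a minimal idempotent ultrafilter. -/
def IsMinimalIdempotent (p : Ultrafilter ℕ) : Prop :=
  IdempotentUF p ∧
    ∀ q : Ultrafilter ℕ, IdempotentUF q → uAdd q p = q → uAdd p q = q → q = p

/-- Tensor product `⊗_{i=1}^m p_i` of ultrafilters on ℕ, as an ultrafilter on `Fin m → ℕ`. -/
def tensor : ∀ m : ℕ, (Fin m → Ultrafilter ℕ) → Ultrafilter (Fin m → ℕ)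
  | 0, _ => pure fun i => i.elim0
  | m + 1, p =>
      (p 0).bind fun x => (tensor m fun i => p i.succ).map fun v => Fin.cons x v

/-- `f : ℕ → ℕ` is (given by) a polynomial with coefficients in ℕ and zero constant term. -/
def IsPolyZeroConst (f : ℕ → ℕ) : Prop :=
  ∃ P : Polynomial ℕ, P.coeff 0 = 0 ∧ ∀ x, f x = P.eval x

/-- The linear combination `a₁·p₁ + a₂·p₂ + ⋯ + a_m·p_m` of ultrafilters on ℕ. -/
def linComb : ∀ m : ℕ, (Fin m → ℕ) → (Fin m → Ultrafilter ℕ) → Ultrafilter ℕ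
  | 0, _, _ => pure 0
  | m + 1, a, p =>
      uAdd ((p 0).map fun x => a 0 * x)
        (linComb m (fun i => a i.succ) fun i => p i.succ)

/-!
A finite family of polynomial maps into an abelian group acting minimally on a compact space is
jointly recurrent along the finite sums of any sequence. This is proved by polynomial exhaustion:
from a family `A` one passes to the maps `y ↦ φ (y + h) - φ h - ψ y`, where `ψ` is a leading part
of least degree in `A`, which lowers the multiset of degrees; recurrence comes back to `A` by
focusing an open set at more and more translates of the target.

Applied to a minimal subsystem of the ultrafilters on `ℤ` at `+∞`, recurrence gives an ultrafilter
on `ℕ` all of whose members are polynomial J-sets. These ultrafilters form a closed two-sided ideal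
of `βℕ`, so every minimal idempotent is one of them.

For such an idempotent `p`, a recursion along `⊂` picks `α F` and `H F` so that all partial sums
over chains ending in `F`, finitely many in number, stay in the star sets of their targets; the
polynomials `y ↦ P (x + y) - P x` reduce the extension of a partial sum to the polynomial J-set
property. The tensor product is treated one factor at a time: once the first coordinate has reached
the chain member `F`, the remaining ones only have to lie in the intersection of finitely many
members of the tensor product of the other factors. This is why the targets form a family indexed
by finite sets.
-/

open Set Filter
open scoped Pointwise

section PolyMap

variable {M G : Type*} [AddZeroClass M] [AddCommGroup G]

/-- The reduced difference `x ↦ φ (x + h) - φ h - φ x`, which vanishes for all `h` exactly when `φ`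
is additive. -/
def reducedDiff (h : M) : (M → G) →+ (M → G) where
  toFun φ x := φ (x + h) - φ h - φ x
  map_zero' := by ext; simp
  map_add' φ ψ := by ext; simp only [Pi.add_apply]; abel

/-- The polynomial maps `φ : M → G` with `φ 0 = 0` of degree at most `d`: those that vanish after
taking `d` reduced differences. -/
def polyMap : ℕ → AddSubgroup (M → G)
  | 0 => ⊥
  | d + 1 => ⨅ h, (polyMap d).comap (reducedDiff h)

lemma mem_polyMap_succ {d : ℕ} {φ : M → G} :
    φ ∈ polyMap (d + 1) ↔ ∀ h, reducedDiff h φ ∈ polyMap d := by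
  simp only [polyMap, AddSubgroup.mem_iInf, AddSubgroup.mem_comap]

lemma polyMap_mono : Monotone (polyMap : ℕ → AddSubgroup (M → G)) := by
  refine monotone_nat_of_le_succ fun d => ?_
  induction d with
  | zero => exact bot_le
  | succ d ih => exact fun φ hφ => mem_polyMap_succ.2 fun h => ih (mem_polyMap_succ.1 hφ h)

lemma map_zero_of_mem_polyMap {d : ℕ} {φ : M → G} (hφ : φ ∈ polyMap d) : φ 0 = 0 := by
  induction d generalizing φ with
  | zero => exact congrFun (AddSubgroup.mem_bot.1 hφ) 0
  | succ d ih => simpa [reducedDiff] using ih (mem_polyMap_succ.1 hφ 0)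

lemma addMonoidHom_mem_polyMap_one (u : M →+ G) : ⇑u ∈ polyMap 1 :=
  mem_polyMap_succ.2 fun h => AddSubgroup.mem_bot.2 <| by
    ext
    simp [reducedDiff]

variable {R : Type*} [CommRing R]

lemma const_mul_mem_polyMap (c : R) {d : ℕ} {φ : M → R} (hφ : φ ∈ polyMap d) :
    c • φ ∈ polyMap d := by
  induction d generalizing φ with
  | zero =>
    rw [AddSubgroup.mem_bot.1 hφ, smul_zero]
    exact zero_mem _
  | succ d ih =>
    refine mem_polyMap_succ.2 fun h => ?_
    have hdiff : reducedDiff h (c • φ) = c • reducedDiff h φ := by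
      ext x
      simp only [reducedDiff, AddMonoidHom.coe_mk, ZeroHom.coe_mk, Pi.smul_apply, smul_sub]
    rw [hdiff]
    exact ih (mem_polyMap_succ.1 hφ h)

lemma addMonoidHom_mul_mem_polyMap (u : M →+ R) {d : ℕ} {φ : M → R} (hφ : φ ∈ polyMap d) :
    ⇑u * φ ∈ polyMap (d + 1) := by
  induction d generalizing φ with
  | zero =>
    rw [AddSubgroup.mem_bot.1 hφ, mul_zero]
    exact zero_mem _
  | succ d ih =>
    refine mem_polyMap_succ.2 fun h => ?_
    have hdiff := mem_polyMap_succ.1 hφ h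
    have leibniz : reducedDiff h (⇑u * φ)
        = ⇑u * reducedDiff h φ + φ h • ⇑u + u h • (reducedDiff h φ + φ) := by
      ext x
      simp only [reducedDiff, AddMonoidHom.coe_mk, ZeroHom.coe_mk, Pi.mul_apply, Pi.add_apply,
        Pi.smul_apply, smul_eq_mul, map_add]
      ring
    have hu : ⇑u ∈ polyMap (d + 1) :=
      polyMap_mono (Nat.le_add_left 1 d) (addMonoidHom_mem_polyMap_one u)
    rw [leibniz]
    exact add_mem (add_mem (ih hdiff) (const_mul_mem_polyMap _ hu))
      (const_mul_mem_polyMap _ (add_mem (polyMap_mono d.le_succ hdiff) hφ))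

lemma pow_succ_mem_polyMap (u : M →+ R) (n : ℕ) : ⇑u ^ (n + 1) ∈ polyMap (n + 1) := by
  induction n with
  | zero => simpa only [zero_add, pow_one] using addMonoidHom_mem_polyMap_one u
  | succ n ih =>
    rw [pow_succ']
    exact addMonoidHom_mul_mem_polyMap u ih

lemma aeval_mem_polyMap (u : M →+ R) {P : Polynomial ℕ} (hP : P.coeff 0 = 0) :
    (fun x => P.aeval (u x)) ∈ polyMap P.natDegree := by
  have heval : (fun x => P.aeval (u x))
      = ∑ i ∈ Finset.range (P.natDegree + 1), P.coeff i • ⇑u ^ i := by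
    ext x
    simp [Polynomial.aeval_eq_sum_range]
  rw [heval]
  refine sum_mem fun i hi => ?_
  cases i with
  | zero =>
    rw [hP, zero_smul]
    exact zero_mem _
  | succ n =>
    exact nsmul_mem (polyMap_mono (Finset.mem_range_succ_iff.1 hi) (pow_succ_mem_polyMap u n)) _

end PolyMap

section Recurrence

variable {M G : Type*} [AddCommMonoid M] [AddCommGroup G]
variable (X : Type*) [TopologicalSpace X] [AddAction G X]

/-- Joint topological recurrence, along the finite sums of the sequence `x`, of the finite family
`A` of maps `M → G`: every nonempty open set contains a point that returns to it under all the
translations `φ (∑ t ∈ β, x t)`, `φ ∈ A`, for some block `β` beyond any prescribed bound. -/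
def IsIPRecurrent (x : ℕ → M) (A : Finset (M → G)) : Prop :=
  ∀ U : Set X, IsOpen U → U.Nonempty → ∀ L : ℕ, ∃ β : Finset ℕ, β.Nonempty ∧ (∀ t ∈ β, L ≤ t) ∧
    ∃ y ∈ U, ∀ φ ∈ A, φ (∑ t ∈ β, x t) +ᵥ y ∈ U

variable {X}

open Classical in
lemma IsIPRecurrent.of_erase_zero {x : ℕ → M} {A : Finset (M → G)}
    (hA : IsIPRecurrent X x (A.erase 0)) : IsIPRecurrent X x A := by
  intro U hU hU_ne L
  obtain ⟨β, hβ_ne, hβL, y, hy, hret⟩ := hA U hU hU_ne L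
  refine ⟨β, hβ_ne, hβL, y, hy, fun φ hφ => ?_⟩
  by_cases hφ0 : φ = 0
  · rwa [hφ0, Pi.zero_apply, zero_vadd]
  · exact hret φ (Finset.mem_erase.2 ⟨hφ0, hφ⟩)

lemma isIPRecurrent_empty (x : ℕ → M) : IsIPRecurrent X x (∅ : Finset (M → G)) :=
  fun _ _ ⟨y, hy⟩ L => ⟨{L}, Finset.singleton_nonempty L, fun _ ht =>
    (Finset.mem_singleton.1 ht).ge, y, hy, fun _ hφ => absurd hφ (Finset.notMem_empty _)⟩

/-- The nonempty open set `V` is focused at the translates `g +ᵥ U`, `g ∈ Γ`: for each of them some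
block beyond `L` moves `V` into it simultaneously for all `φ ∈ A`. -/
structure IsFocused (x : ℕ → M) (A : Finset (M → G)) (U : Set X) (L : ℕ) (V : Set X)
    (Γ : Finset G) : Prop where
  isOpen : IsOpen V
  nonempty : V.Nonempty
  exists_block : ∀ g ∈ Γ, ∃ β : Finset ℕ, β.Nonempty ∧ (∀ t ∈ β, L ≤ t) ∧
    ∀ φ ∈ A, ∀ y ∈ V, φ (∑ t ∈ β, x t) +ᵥ y ∈ g +ᵥ U

open Classical in
/-- The family to which polynomial exhaustion passes from `A`: the maps
`y ↦ φ (y + h) - φ h - ψ y` for `φ ∈ A` and `h ∈ S`. -/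
noncomputable def derivedFamily (A : Finset (M → G)) (ψ : M → G) (S : Finset M) :
    Finset (M → G) :=
  Finset.image₂ (fun φ h => reducedDiff h φ + φ - ψ) A S

variable [ContinuousConstVAdd G X]

lemma IsIPRecurrent.exists_open_translates {x : ℕ → M} {A : Finset (M → G)} {ψ : M → G}
    {S : Finset M} (hrec : IsIPRecurrent X x (derivedFamily A ψ S)) {W : Set X} (hW : IsOpen W)
    (hW_ne : W.Nonempty) (L : ℕ) : ∃ γ : Finset ℕ, γ.Nonempty ∧ (∀ t ∈ γ, L ≤ t) ∧
      ∃ V : Set X, IsOpen V ∧ V.Nonempty ∧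
        ∀ z ∈ V, ∀ φ ∈ A, ∀ h ∈ S, (φ (∑ t ∈ γ, x t + h) - φ h) +ᵥ z ∈ W := by
  classical
  obtain ⟨γ, hγ_ne, hγL, y, -, hy⟩ := hrec W hW hW_ne L
  refine ⟨γ, hγ_ne, hγL, ⋂ φ ∈ A, ⋂ h ∈ S, (fun z => (φ (∑ t ∈ γ, x t + h) - φ h) +ᵥ z) ⁻¹' W,
    ?_, ⟨-ψ (∑ t ∈ γ, x t) +ᵥ y, ?_⟩,
    fun z hz φ hφ h hh => mem_iInter₂.1 (mem_iInter₂.1 hz φ hφ) h hh⟩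
  · exact isOpen_biInter_finset fun φ _ => isOpen_biInter_finset fun h _ =>
      hW.preimage (continuous_const_vadd _)
  · refine mem_iInter₂.2 fun φ hφ => mem_iInter₂.2 fun h hh => ?_
    have hmem := hy _ (Finset.mem_image₂_of_mem hφ hh)
    have hshift : (reducedDiff h φ + φ - ψ) (∑ t ∈ γ, x t)
        = φ (∑ t ∈ γ, x t + h) - φ h + -ψ (∑ t ∈ γ, x t) := by
      simp only [reducedDiff, AddMonoidHom.coe_mk, ZeroHom.coe_mk, Pi.add_apply, Pi.sub_apply]
      abel
    rwa [hshift, add_vadd] at hmem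

lemma exists_forall_disjoint_of_le {ι : Type*} (Γ : Finset ι) (b : ι → Finset ℕ) :
    ∃ N, ∀ γ : Finset ℕ, (∀ t ∈ γ, N ≤ t) → ∀ k ∈ Γ, Disjoint γ (b k) := by
  classical
  obtain ⟨N, hN⟩ := (Γ.biUnion b).exists_nat_subset_range
  refine ⟨N, fun γ hγ k hk => Finset.disjoint_left.2 fun t htγ htb => ?_⟩
  exact (hγ t htγ).not_gt (Finset.mem_range.1 (hN (Finset.mem_biUnion.2 ⟨k, hk, htb⟩)))

open Classical in
lemma IsFocused.exists_insert {x : ℕ → M} {A : Finset (M → G)} {U V : Set X} {L : ℕ}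
    {Γ : Finset G} (hV : IsFocused x A U L V Γ) (hU : IsOpen U) (hA : ∀ φ ∈ A, φ 0 = 0)
    (ψ : M → G) (hrec : ∀ S, IsIPRecurrent X x (derivedFamily A ψ S)) {g : G}
    (hg : (V ∩ (g +ᵥ U)).Nonempty) : ∃ V', IsFocused x A U L V' (insert g Γ) := by
  choose! b _ hb_ge hb using hV.exists_block
  obtain ⟨N, hN⟩ := exists_forall_disjoint_of_le Γ b
  let S : Finset M := insert 0 (Γ.image fun k => ∑ t ∈ b k, x t)
  obtain ⟨γ, hγ_ne, hγ_ge, V', hV'_open, hV'_ne, hV'⟩ :=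
    (hrec S).exists_open_translates (hV.isOpen.inter (hU.vadd g)) hg (max L N)
  have hγL : ∀ t ∈ γ, L ≤ t := fun t ht => (le_max_left L N).trans (hγ_ge t ht)
  have hdisj := hN γ fun t ht => (le_max_right L N).trans (hγ_ge t ht)
  refine ⟨V', hV'_open, hV'_ne, fun k hk => ?_⟩
  obtain rfl | hkΓ := Finset.mem_insert.1 hk
  · refine ⟨γ, hγ_ne, hγL, fun φ hφ z hz => ?_⟩
    simpa only [add_zero, hA φ hφ, sub_zero] using
      (hV' z hz φ hφ 0 (Finset.mem_insert_self _ _)).2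
  · have hkS : ∑ t ∈ b k, x t ∈ S := Finset.mem_insert_of_mem (Finset.mem_image_of_mem _ hkΓ)
    refine ⟨γ ∪ b k, hγ_ne.mono Finset.subset_union_left, fun t ht =>
      (Finset.mem_union.1 ht).elim (hγL t) (hb_ge k hkΓ t), fun φ hφ z hz => ?_⟩
    simpa only [Finset.sum_union (hdisj k hkΓ), vadd_vadd, add_sub_cancel] using
      hb k hkΓ φ hφ _ (hV' z hz φ hφ _ hkS).1

variable [CompactSpace X] [AddAction.IsMinimal G X]

lemma IsIPRecurrent.of_derivedFamily {x : ℕ → M} {A : Finset (M → G)} (hA : ∀ φ ∈ A, φ 0 = 0)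
    (ψ : M → G) (hrec : ∀ S, IsIPRecurrent X x (derivedFamily A ψ S)) : IsIPRecurrent X x A := by
  classical
  intro U hU hU_ne L
  obtain ⟨I, hI⟩ := isCompact_univ.exists_finite_cover_vadd G hU hU_ne
  obtain ⟨Γ, hΓ⟩ := (I.powerset.filter fun Γ => ∃ V, IsFocused x A U L V Γ).exists_maximal
    ⟨∅, by simpa using ⟨U, hU, hU_ne, by simp⟩⟩
  obtain ⟨hΓI, V, hV⟩ : Γ ⊆ I ∧ ∃ V, IsFocused x A U L V Γ := by simpa using hΓ.prop
  obtain ⟨y, hyV⟩ := hV.nonempty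
  -- By minimality `V` meets a translate `g +ᵥ U`; as `Γ` is maximal, `V` is already focused at it.
  obtain ⟨g, hgI, hyU⟩ := mem_iUnion₂.1 (hI (mem_univ y))
  have hgΓ : g ∈ Γ := by
    obtain ⟨V', hV'⟩ := hV.exists_insert hU hA ψ hrec ⟨y, hyV, hyU⟩
    refine hΓ.le_of_ge (y := insert g Γ) ?_ (Finset.subset_insert g Γ)
      (Finset.mem_insert_self g Γ)
    simpa [Finset.insert_subset_iff, hgI, hΓI] using ⟨V', hV'⟩
  obtain ⟨β, hβ_ne, hβL, hβ⟩ := hV.exists_block g hgΓ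
  refine ⟨β, hβ_ne, hβL, -g +ᵥ y, mem_vadd_set_iff_neg_vadd_mem.1 hyU, fun φ hφ => ?_⟩
  rw [vadd_comm]
  exact mem_vadd_set_iff_neg_vadd_mem.1 (hβ φ hφ y hyV)

/-- `C` lists, with degrees, polynomial maps that serve as leading parts for the nonzero members of
`A`: a pair `(ℓ, d) ∈ C` is of degree at most `d + 1`, and stands for the class of all `φ` with
`φ - ℓ` of degree at most `d`. The multiset of the `d`'s is the weight for polynomial exhaustion. -/
structure IsLeadingSystem (A : Finset (M → G)) (C : Multiset ((M → G) × ℕ)) : Prop where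
  mem_polyMap : ∀ q ∈ C, q.1 ∈ polyMap (q.2 + 1)
  exists_sub_mem : ∀ φ ∈ A, φ ≠ 0 → ∃ q ∈ C, φ - q.1 ∈ polyMap q.2

lemma mem_polyMap_of_sub_mem {d : ℕ} {φ ℓ : M → G} (hℓ : ℓ ∈ polyMap (d + 1))
    (hφ : φ - ℓ ∈ polyMap d) : φ ∈ polyMap (d + 1) := by
  simpa only [sub_add_cancel] using add_mem (polyMap_mono d.le_succ hφ) hℓ

lemma reducedDiff_add_sub_mem_polyMap {d : ℕ} {φ ℓ : M → G} (hℓ : ℓ ∈ polyMap (d + 1))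
    (hφ : φ - ℓ ∈ polyMap d) (h : M) : reducedDiff h φ + φ - ℓ ∈ polyMap d := by
  rw [add_sub_assoc]
  exact add_mem (mem_polyMap_succ.1 (mem_polyMap_of_sub_mem hℓ hφ) h) hφ

lemma IsLeadingSystem.map_zero {A : Finset (M → G)} {C : Multiset ((M → G) × ℕ)}
    (hC : IsLeadingSystem A C) {φ : M → G} (hφ : φ ∈ A) : φ 0 = 0 := by
  by_cases hφ0 : φ = 0
  · rw [hφ0, Pi.zero_apply]
  · obtain ⟨q, hq, hsub⟩ := hC.exists_sub_mem φ hφ hφ0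
    exact map_zero_of_mem_polyMap (mem_polyMap_of_sub_mem (hC.mem_polyMap q hq) hsub)

open Classical in
/-- The leading system that a derived family `N` inherits from `q₀ ::ₘ C`: the class of `q₀`, of
least degree, is broken up into single members of `N` of smaller degree, while the other leading
parts keep their degree. -/
noncomputable def derivedSystem (q₀ : (M → G) × ℕ) (C : Multiset ((M → G) × ℕ))
    (N : Finset (M → G)) : Multiset ((M → G) × ℕ) :=
  C.map (fun q => (q.1 - q₀.1, q.2)) +
    (N.filter fun φ => φ ≠ 0 ∧ φ ∈ polyMap q₀.2).val.map (fun φ => (φ, q₀.2 - 1))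

lemma pos_of_mem_polyMap_of_ne_zero {d : ℕ} {φ : M → G} (hφ : φ ∈ polyMap d) (hφ0 : φ ≠ 0) :
    0 < d :=
  Nat.pos_of_ne_zero fun hd => by
    subst hd
    exact hφ0 (AddSubgroup.mem_bot.1 hφ)

lemma IsLeadingSystem.derivedSystem {A : Finset (M → G)} {q₀ : (M → G) × ℕ}
    {C : Multiset ((M → G) × ℕ)} (hC : IsLeadingSystem A (q₀ ::ₘ C)) (h0 : 0 ∉ A)
    (hmin : ∀ q ∈ C, q₀.2 ≤ q.2) (S : Finset M) :
    IsLeadingSystem (derivedFamily A q₀.1 S) (derivedSystem q₀ C (derivedFamily A q₀.1 S)) where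
  mem_polyMap q hq := by
    classical
    rcases Multiset.mem_add.1 hq with hq | hq
    · obtain ⟨q', hq', rfl⟩ := Multiset.mem_map.1 hq
      exact sub_mem (hC.mem_polyMap q' (Multiset.mem_cons_of_mem hq'))
        (polyMap_mono (Nat.succ_le_succ (hmin q' hq'))
          (hC.mem_polyMap q₀ (Multiset.mem_cons_self q₀ C)))
    · obtain ⟨φ, hφ, rfl⟩ := Multiset.mem_map.1 hq
      obtain ⟨-, hφ0, hφ⟩ := Finset.mem_filter.1 hφ
      rwa [Nat.sub_add_cancel (pos_of_mem_polyMap_of_ne_zero hφ hφ0)]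
  exists_sub_mem ψ hψ hψ0 := by
    classical
    obtain ⟨φ, hφ, h, -, rfl⟩ := Finset.mem_image₂.1 hψ
    obtain ⟨q, hq, hsub⟩ := hC.exists_sub_mem φ hφ (ne_of_mem_of_not_mem hφ h0)
    have hmem := reducedDiff_add_sub_mem_polyMap (hC.mem_polyMap q hq) hsub h
    rcases Multiset.mem_cons.1 hq with rfl | hq
    · refine ⟨(_, q.2 - 1), Multiset.mem_add.2 (.inr (Multiset.mem_map_of_mem _
        (Finset.mem_filter.2 ⟨hψ, hψ0, hmem⟩))), ?_⟩
      rw [sub_self]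
      exact zero_mem _
    · refine ⟨(q.1 - q₀.1, q.2), Multiset.mem_add.2 (.inl (Multiset.mem_map_of_mem _ hq)), ?_⟩
      rwa [sub_sub_sub_cancel_right]

lemma derivedSystem_lt (q₀ : (M → G) × ℕ) (C : Multiset ((M → G) × ℕ)) (N : Finset (M → G)) :
    ((derivedSystem q₀ C N).map Prod.snd).IsDershowitzMannaLT ((q₀ ::ₘ C).map Prod.snd) := by
  classical
  refine ⟨C.map Prod.snd, (N.filter fun φ => φ ≠ 0 ∧ φ ∈ polyMap q₀.2).val.map fun _ => q₀.2 - 1,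
    {q₀.2}, Multiset.singleton_ne_zero _, ?_, ?_, fun d hd => ?_⟩
  · simp only [derivedSystem, Multiset.map_add, Multiset.map_map, Function.comp_def]
  · rw [Multiset.map_cons, ← Multiset.singleton_add, add_comm]
  · obtain ⟨φ, hφ, rfl⟩ := Multiset.mem_map.1 hd
    obtain ⟨-, hφ0, hφ⟩ := Finset.mem_filter.1 hφ
    exact ⟨q₀.2, Multiset.mem_singleton_self _,
      Nat.sub_one_lt (pos_of_mem_polyMap_of_ne_zero hφ hφ0).ne'⟩

lemma IsLeadingSystem.isIPRecurrent {A : Finset (M → G)} {C : Multiset ((M → G) × ℕ)}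
    (hC : IsLeadingSystem A C) (x : ℕ → M) : IsIPRecurrent X x A := by
  classical
  have wf : WellFounded (Multiset.IsDershowitzMannaLT (α := ℕ)) :=
    Multiset.wellFounded_isDershowitzMannaLT
  induction hw : C.map Prod.snd using wf.induction generalizing A C with | _ w ih
  refine .of_erase_zero ?_
  obtain rfl | hC_ne := eq_or_ne C 0
  · have hA : A.erase 0 = ∅ := Finset.eq_empty_of_forall_notMem fun φ hφ => by
      obtain ⟨hφ0, hφA⟩ := Finset.mem_erase.1 hφ
      obtain ⟨q, hq, -⟩ := hC.exists_sub_mem φ hφA hφ0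
      exact Multiset.notMem_zero q hq
    rw [hA]
    exact isIPRecurrent_empty x
  obtain ⟨q₀, hq₀, hmin⟩ := C.exists_min_image Prod.snd hC_ne
  obtain ⟨C, rfl⟩ := Multiset.exists_cons_of_mem hq₀
  have hC' : IsLeadingSystem (A.erase 0) (q₀ ::ₘ C) :=
    ⟨hC.mem_polyMap, fun φ hφ => hC.exists_sub_mem φ (Finset.mem_of_mem_erase hφ)⟩
  refine .of_derivedFamily (fun φ => hC'.map_zero) q₀.1 fun S => ?_
  exact ih _ (hw ▸ derivedSystem_lt q₀ C _) (hC'.derivedSystem (Finset.notMem_erase 0 A)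
    (fun q hq => hmin q (Multiset.mem_cons_of_mem hq)) S) rfl

variable (X) in
theorem isIPRecurrent_of_mem_polyMap (x : ℕ → M) (A : Finset (M → G))
    (hA : ∀ φ ∈ A, ∃ d, φ ∈ polyMap d) : IsIPRecurrent X x A := by
  choose! d hd using hA
  have hC : IsLeadingSystem A (A.val.map fun φ => (φ, d φ)) := by
    refine ⟨fun q hq => ?_, fun φ hφ _ => ⟨(φ, d φ), Multiset.mem_map_of_mem _ hφ, ?_⟩⟩
    · obtain ⟨φ, hφ, rfl⟩ := Multiset.mem_map.1 hq
      exact polyMap_mono (Nat.le_succ _) (hd φ hφ)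
    · rw [sub_self]
      exact zero_mem _
  exact hC.isIPRecurrent x

end Recurrence

section MinimalSubsystem

variable {G X : Type*} [AddMonoid G] [AddAction G X] [TopologicalSpace X] [CompactSpace X]
  [ContinuousConstVAdd G X]

instance (C : SubAddAction G X) : ContinuousConstVAdd G C :=
  Topology.IsInducing.subtypeVal.continuousConstVAdd id rfl

theorem exists_isMinimal_subAddAction_le {C : SubAddAction G X} (hC : IsClosed (C : Set X))
    (hC_ne : (C : Set X).Nonempty) : ∃ K ≤ C, IsClosed (K : Set X) ∧ (K : Set X).Nonempty ∧
      AddAction.IsMinimal G K := by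
  let S : Set (Set X) := {s | IsClosed s ∧ s.Nonempty ∧ ∀ g : G, ∀ y ∈ s, g +ᵥ y ∈ s}
  obtain ⟨K, hKC, hK⟩ := zorn_superset_nonempty S (fun c hcS hc hc_ne => by
    have := hc_ne.to_subtype
    have hdir : DirectedOn (fun s t : Set X => s ⊇ t) c :=
      IsChain.directedOn (r := fun s t : Set X => s ⊇ t) hc.symm
    exact ⟨⋂₀ c, ⟨isClosed_sInter fun s hs => (hcS hs).1,
      IsCompact.nonempty_sInter_of_directed_nonempty_isCompact_isClosed hdir
        (fun s hs => (hcS hs).2.1) (fun s hs => (hcS hs).1.isCompact) (fun s hs => (hcS hs).1),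
      fun g y hy s hs => (hcS hs).2.2 g y (hy s hs)⟩, fun s hs => sInter_subset_of_mem hs⟩)
    (C : Set X) ⟨hC, hC_ne, fun g y hy => C.vadd_mem g hy⟩
  obtain ⟨hK_closed, hK_ne, hK_inv⟩ := hK.prop
  refine ⟨⟨K, fun g y hy => hK_inv g y hy⟩, hKC, hK_closed, hK_ne,
    (isMinimal_iff_isClosed_vadd_invariant G).2 fun s hs hs_inv => ?_⟩
  rw [or_iff_not_imp_left, ← ne_eq, ← nonempty_iff_ne_empty]
  intro hs_ne
  have himage : Subtype.val '' s ∈ S := by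
    refine ⟨hK_closed.isClosedMap_subtype_val s hs, hs_ne.image _, ?_⟩
    rintro g _ ⟨y, hy, rfl⟩
    exact ⟨g +ᵥ y, hs_inv g (vadd_mem_vadd_set hy), rfl⟩
  exact eq_univ_of_forall fun y => by
    obtain ⟨z, hz, hzy⟩ := hK.le_of_le himage (Subtype.coe_image_subset _ s) y.2
    rwa [← Subtype.ext hzy]

end MinimalSubsystem

section UltrafilterAction

variable {G α : Type*}

/-- The action of `G` on the ultrafilters on `α` by pushing forward along translations. -/
instance ultrafilterAddAction [AddMonoid G] [AddAction G α] : AddAction G (Ultrafilter α) where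
  vadd g u := u.map (g +ᵥ ·)
  zero_vadd u := by
    change u.map (fun a => (0 : G) +ᵥ a) = u
    simp only [zero_vadd]
    exact u.map_id
  add_vadd g h u := by
    change u.map (fun a => (g + h) +ᵥ a) = (u.map (h +ᵥ ·)).map (g +ᵥ ·)
    rw [Ultrafilter.map_map]
    simp only [add_vadd, Function.comp_def]

instance [AddMonoid G] [AddAction G α] : ContinuousConstVAdd G (Ultrafilter α) where
  continuous_const_vadd g := ultrafilterBasis_is_basis.continuous_iff.2 <|
    forall_mem_range.2 fun s => ultrafilter_isOpen_basic ((g +ᵥ ·) ⁻¹' s)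

lemma isClosed_setOf_ultrafilter_le (f : Filter α) : IsClosed {u : Ultrafilter α | ↑u ≤ f} := by
  have hinter : {u : Ultrafilter α | ↑u ≤ f} = ⋂ s ∈ f, {u | s ∈ u} := by
    ext u
    simp only [mem_iInter]
    rfl
  rw [hinter]
  exact isClosed_biInter fun s _ => ultrafilter_isClosed_basic s

/-- The ultrafilters on `ℤ` that converge to `+∞`, as a subsystem under translations. -/
def ultrafilterAtTop : SubAddAction ℤ (Ultrafilter ℤ) where
  carrier := {u | ↑u ≤ (atTop : Filter ℤ)}
  vadd_mem' g _ hu := (tendsto_atTop_add_const_left atTop g tendsto_id).comp hu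

end UltrafilterAction

section PolyJSet

/-- The polynomial analogue of a J-set, with blocks beyond any prescribed bound. -/
def IsPolyJSet (B : Set ℕ) : Prop :=
  ∀ F T : Finset (ℕ → ℕ), (∀ P ∈ T, IsPolyZeroConst P) → ∀ L : ℕ,
    ∃ (a : ℕ) (β : Finset ℕ), β.Nonempty ∧ (∀ t ∈ β, L ≤ t) ∧
      ∀ f ∈ F, ∀ P ∈ T, a + P (∑ t ∈ β, f t) ∈ B

/-- Every member of `p` is a polynomial J-set. -/
def MemPolyJ (p : Ultrafilter ℕ) : Prop := ∀ B ∈ p, IsPolyJSet B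

lemma IsPolyZeroConst.comp_addMonoidHom_mem_polyMap {P : ℕ → ℕ} (hP : IsPolyZeroConst P)
    {M : Type*} [AddZeroClass M] (u : M →+ ℕ) : ∃ d, (fun y => (P (u y) : ℤ)) ∈ polyMap d := by
  obtain ⟨Q, hQ, hPQ⟩ := hP
  refine ⟨Q.natDegree, ?_⟩
  have haeval : (fun y => (P (u y) : ℤ)) =
      fun y => Q.aeval ((Nat.castAddMonoidHom ℤ).comp u y) := by
    ext y
    rw [hPQ, Polynomial.aeval_def]
    exact (Polynomial.eval₂_at_natCast (algebraMap ℕ ℤ) (u y)).symm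
  rw [haeval]
  exact aeval_mem_polyMap _ hQ

theorem exists_memPolyJ : ∃ p : Ultrafilter ℕ, MemPolyJ p := by
  classical
  obtain ⟨K, hK_top, hK_closed, ⟨u, hu⟩, hK_min⟩ :=
    exists_isMinimal_subAddAction_le (C := ultrafilterAtTop) (isClosed_setOf_ultrafilter_le atTop)
      ⟨Ultrafilter.of atTop, Ultrafilter.of_le atTop⟩
  have : CompactSpace K := isCompact_iff_compactSpace.1 hK_closed.isCompact
  refine ⟨u.map Int.toNat, fun B hB F T hT L => ?_⟩
  let A : Finset (((ℕ → ℕ) → ℕ) → ℤ) := Finset.image₂ (fun f P y => (P (y f) : ℤ)) F T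
  have hA : ∀ φ ∈ A, ∃ d, φ ∈ polyMap d := Finset.forall_mem_image₂.2 fun f _ P hP =>
    (hT P hP).comp_addMonoidHom_mem_polyMap (Pi.evalAddMonoidHom (fun _ => ℕ) f)
  let U : Set K := {v | Int.toNat ⁻¹' B ∈ (v : Ultrafilter ℤ)}
  obtain ⟨β, hβ_ne, hβL, v, -, hv⟩ := isIPRecurrent_of_mem_polyMap K (fun t f => f t) A hA U
    ((ultrafilter_isOpen_basic _).preimage continuous_subtype_val) ⟨⟨u, hu⟩, hB⟩ L
  have hreturn : ∀ᶠ a in (v : Ultrafilter ℤ), ∀ f ∈ F, ∀ P ∈ T,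
      ((P (∑ t ∈ β, f t) : ℤ) + a).toNat ∈ B := by
    refine (eventually_all_finset F).2 fun f hf => (eventually_all_finset T).2 fun P hP => ?_
    have hmem := hv _ (Finset.mem_image₂_of_mem hf hP)
    rw [Finset.sum_apply] at hmem
    exact hmem
  obtain ⟨a, ha, ha0⟩ := (hreturn.and (hK_top v.2 (Ici_mem_atTop 0))).exists
  refine ⟨a.toNat, β, hβ_ne, hβL, fun f hf P hP => ?_⟩
  have hcast : ((P (∑ t ∈ β, f t) : ℤ) + a).toNat = a.toNat + P (∑ t ∈ β, f t) := by
    have : 0 ≤ a := ha0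
    omega
  exact hcast ▸ ha f hf P hP

lemma mem_uAdd {p q : Ultrafilter ℕ} {B : Set ℕ} : B ∈ uAdd p q ↔ {x | {y | x + y ∈ B} ∈ q} ∈ p :=
  Iff.rfl

lemma MemPolyJ.uAdd_right {p : Ultrafilter ℕ} (hp : MemPolyJ p) (q : Ultrafilter ℕ) :
    MemPolyJ (uAdd p q) := by
  intro B hB F T hT L
  obtain ⟨a, β, hβ_ne, hβL, hβ⟩ := hp _ (mem_uAdd.1 hB) F T hT L
  have hall : ∀ᶠ y in (q : Filter ℕ), ∀ f ∈ F, ∀ P ∈ T, a + P (∑ t ∈ β, f t) + y ∈ B :=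
    (eventually_all_finset F).2 fun f hf => (eventually_all_finset T).2 fun P hP => hβ f hf P hP
  obtain ⟨y, hy⟩ := hall.exists
  refine ⟨a + y, β, hβ_ne, hβL, fun f hf P hP => ?_⟩
  rw [add_right_comm]
  exact hy f hf P hP

lemma MemPolyJ.uAdd_left {q : Ultrafilter ℕ} (hq : MemPolyJ q) (p : Ultrafilter ℕ) :
    MemPolyJ (uAdd p q) := by
  intro B hB F T hT L
  obtain ⟨x, hx⟩ := p.nonempty_of_mem (mem_uAdd.1 hB)
  obtain ⟨a, β, hβ_ne, hβL, hβ⟩ := hq _ hx F T hT L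
  refine ⟨x + a, β, hβ_ne, hβL, fun f hf P hP => ?_⟩
  rw [add_assoc]
  exact hβ f hf P hP

lemma isClosed_setOf_forall_mem {α : Type*} (Q : Set α → Prop) :
    IsClosed {u : Ultrafilter α | ∀ B ∈ u, Q B} := by
  have hinter : {u : Ultrafilter α | ∀ B ∈ u, Q B} = ⋂ B ∈ {B | ¬ Q B}, {u | B ∈ u}ᶜ := by
    ext u
    simp only [mem_iInter]
    exact forall_congr' fun B => not_imp_not.symm
  rw [hinter]
  exact isClosed_biInter fun B _ => (ultrafilter_isOpen_basic B).isClosed_compl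

end PolyJSet

section MinimalIdempotent

theorem exists_idempotent_below_of_isClosed_ideal {S : Type*} [AddSemigroup S] [TopologicalSpace S]
    [CompactSpace S] [T2Space S] (hcont : ∀ r : S, Continuous (· + r)) {J : Set S}
    (hJ : IsClosed J) (hJ_ne : J.Nonempty) (hJ_right : ∀ q ∈ J, ∀ r, q + r ∈ J)
    (hJ_left : ∀ q ∈ J, ∀ r, r + q ∈ J) {p : S} (hp : p + p = p) :
    ∃ q ∈ J, q + q = q ∧ q + p = q ∧ p + q = q := by
  obtain ⟨_, ⟨r, hr, rfl⟩, he⟩ := exists_idempotent_in_compact_add_subsemigroup hcont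
    ((· + p) '' J) (hJ_ne.image _) (hJ.isCompact.image (hcont p)) <| by
      rintro _ ⟨a, _, rfl⟩ _ ⟨b, hb, rfl⟩
      exact ⟨a + p + b, hJ_left b hb _, add_assoc _ _ _⟩
  have hep : r + p + p = r + p := by rw [add_assoc, hp]
  refine ⟨p + (r + p), hJ_left _ (hJ_right r hr p) p, ?_, ?_, ?_⟩
  · rw [add_assoc, ← add_assoc (r + p) p, hep, he]
  · rw [add_assoc, hep]
  · rw [← add_assoc, hp]

attribute [local instance] Ultrafilter.add Ultrafilter.addSemigroup

lemma uAdd_eq_add (p q : Ultrafilter ℕ) : uAdd p q = p + q :=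
  Ultrafilter.ext fun _ => Iff.rfl

theorem IsMinimalIdempotent.memPolyJ {p : Ultrafilter ℕ} (hp : IsMinimalIdempotent p) :
    MemPolyJ p := by
  have hright : ∀ q, MemPolyJ q → ∀ r, MemPolyJ (q + r) := fun q hq r =>
    uAdd_eq_add q r ▸ hq.uAdd_right r
  have hleft : ∀ q, MemPolyJ q → ∀ r, MemPolyJ (r + q) := fun q hq r =>
    uAdd_eq_add r q ▸ hq.uAdd_left r
  simp only [IsMinimalIdempotent, IdempotentUF, uAdd_eq_add] at hp
  obtain ⟨q, hqJ, hq, hqp, hpq⟩ := exists_idempotent_below_of_isClosed_ideal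
    Ultrafilter.continuous_add_left (isClosed_setOf_forall_mem IsPolyJSet) exists_memPolyJ
    hright hleft hp.1
  exact hp.2 q hq hqp hpq ▸ hqJ

end MinimalIdempotent

section Star

/-- The set `B⋆` of the members of `B` that `p`-almost every translation keeps in `B`; for
idempotent `p` it inherits membership in `p` and can be iterated. -/
def star (p : Ultrafilter ℕ) (B : Set ℕ) : Set ℕ := {x | x ∈ B ∧ {y | x + y ∈ B} ∈ p}

variable {p : Ultrafilter ℕ}

lemma star_mem (hp : IdempotentUF p) {B : Set ℕ} (hB : B ∈ p) : star p B ∈ p := by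
  have hB' : B ∈ uAdd p p := hp.symm ▸ hB
  exact inter_mem hB (mem_uAdd.1 hB')

lemma setOf_add_mem_star_mem (hp : IdempotentUF p) {B : Set ℕ} {x : ℕ} (hx : x ∈ star p B) :
    {y | x + y ∈ star p B} ∈ p := by
  refine mem_of_superset (star_mem hp hx.2) fun y hy => ⟨hy.1, ?_⟩
  change {z | x + y + z ∈ B} ∈ p
  simp only [add_assoc]
  exact hy.2

end Star

section Tower

lemma IsPolyZeroConst.map_zero {P : ℕ → ℕ} (hP : IsPolyZeroConst P) : P 0 = 0 := by
  obtain ⟨Q, hQ, hPQ⟩ := hP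
  rw [hPQ, ← Polynomial.coeff_zero_eq_eval_zero, hQ]

lemma IsPolyZeroConst.exists_forall_map_add {P : ℕ → ℕ} (hP : IsPolyZeroConst P) (x : ℕ) :
    ∃ Q, IsPolyZeroConst Q ∧ ∀ y, P (x + y) = P x + Q y := by
  obtain ⟨P', -, hPP'⟩ := hP
  let R : Polynomial ℕ := P'.comp (Polynomial.X + Polynomial.C x)
  have hR : ∀ y, R.eval y = P (x + y) := fun y => by
    simp only [R, hPP', Polynomial.eval_comp, Polynomial.eval_add, Polynomial.eval_X,
      Polynomial.eval_C, add_comm]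
  refine ⟨fun y => (R.divX * Polynomial.X).eval y,
    ⟨_, Polynomial.coeff_mul_X_zero _, fun _ => rfl⟩, fun y => ?_⟩
  have hdivX := congrArg (Polynomial.eval y) R.divX_mul_X_add
  rw [Polynomial.eval_add, Polynomial.eval_C, Polynomial.coeff_zero_eq_eval_zero, hR, hR,
    add_zero] at hdivX
  rw [← hdivX, add_comm]

/-- A partially built term `∑ α (G i) + P (∑ ∑ f i t)` of the central sets theorem: the values
`shift` of `∑ α (G i)` and `sum` of `∑ ∑ f i t` so far, and the index `base` of the set in which the
term has to lie. -/
structure PartialSum where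
  base : Finset (ℕ → ℕ)
  shift : ℕ
  sum : ℕ

namespace PartialSum

/-- The empty partial sum. -/
def start (K : Finset (ℕ → ℕ)) : PartialSum := ⟨K, 0, 0⟩

/-- The partial sum with one more summand, with shift `a` and sum of `f` over the block `β`. -/
def extend (s : PartialSum) (a : ℕ) (β : Finset ℕ) (f : ℕ → ℕ) : PartialSum :=
  ⟨s.base, s.shift + a, s.sum + ∑ t ∈ β, f t⟩

/-- The term obtained by inserting the partial sum into the polynomial `P`. -/
def value (s : PartialSum) (P : ℕ → ℕ) : ℕ := s.shift + P s.sum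

end PartialSum

lemma MemPolyJ.exists_extend {p : Ultrafilter ℕ} (hp : MemPolyJ p) {T : Finset (ℕ → ℕ)}
    (hT : ∀ P ∈ T, IsPolyZeroConst P) {B : Finset (ℕ → ℕ) → Set ℕ} {S : Finset PartialSum}
    (hS : ∀ s ∈ S, ∀ P ∈ T, {y | s.value P + y ∈ B s.base} ∈ p) (F : Finset (ℕ → ℕ)) (L : ℕ) :
    ∃ (a : ℕ) (β : Finset ℕ), β.Nonempty ∧ (∀ t ∈ β, L ≤ t) ∧
      ∀ s ∈ S, ∀ f ∈ F, ∀ P ∈ T, (s.extend a β f).value P ∈ B s.base := by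
  classical
  choose! Δ hΔ hP_add using fun P hP => (hT P hP).exists_forall_map_add
  obtain ⟨a, β, hβ_ne, hβL, hβ⟩ := hp (⋂ s ∈ S, ⋂ P ∈ T, {y | s.value P + y ∈ B s.base})
    ((biInter_finset_mem S).2 fun s hs => (biInter_finset_mem T).2 fun P hP => hS s hs P hP)
    F (Finset.image₂ (fun P s => Δ P s.sum) T S)
    (Finset.forall_mem_image₂.2 fun P hP s _ => hΔ P hP s.sum) L
  refine ⟨a, β, hβ_ne, hβL, fun s hs f hf P hP => ?_⟩
  have hmem := mem_iInter₂.1 (mem_iInter₂.1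
    (hβ f hf _ (Finset.mem_image₂_of_mem hP hs)) s hs) P hP
  have hvalue : (s.extend a β f).value P = s.value P + (a + Δ P s.sum (∑ t ∈ β, f t)) := by
    simp only [PartialSum.value, PartialSum.extend, hP_add P hP]
    ring
  rwa [hvalue]

/-- One stage of the recursive construction: the values `shift = α F` and `block = H F`, and
finitely many partial sums, all of whose terms can be extended further inside `B`. -/
structure Stage (p : Ultrafilter ℕ) (T : Finset (ℕ → ℕ)) (B : Finset (ℕ → ℕ) → Set ℕ) where
  shift : ℕ
  block : Finset ℕ
  /-- The partial sums whose last summand belongs to this stage. -/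
  sums : Finset PartialSum
  value_mem_star : ∀ s ∈ sums, ∀ P ∈ T, s.value P ∈ star p (B s.base)

variable {p : Ultrafilter ℕ} {T : Finset (ℕ → ℕ)} {B : Finset (ℕ → ℕ) → Set ℕ}

/-- `d` is a possible stage at `F`, given the stages `g` at the proper subsets of `F`. -/
structure Stage.IsNext (F : Finset (ℕ → ℕ)) (g : ∀ F' : Finset (ℕ → ℕ), F' ⊂ F → Stage p T B)
    (d : Stage p T B) : Prop where
  block_nonempty : d.block.Nonempty
  block_lt : ∀ F' hF', ∀ x ∈ (g F' hF').block, ∀ y ∈ d.block, x < y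
  start_extend_mem : ∀ K ⊆ F, ∀ f ∈ F, (PartialSum.start K).extend d.shift d.block f ∈ d.sums
  extend_mem : ∀ F' hF', ∀ s ∈ (g F' hF').sums, ∀ f ∈ F, s.extend d.shift d.block f ∈ d.sums

lemma exists_finset_forall_mem_iff_of_ssubset {α β : Type*} {F : Finset α}
    (S : ∀ F' : Finset α, F' ⊂ F → Finset β) : ∃ U : Finset β, ∀ b, b ∈ U ↔ ∃ F' h, b ∈ S F' h := by
  classical
  refine ⟨F.ssubsets.attach.biUnion fun F' => S F' (Finset.mem_ssubsets.1 F'.2), fun b => ?_⟩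
  simp only [Finset.mem_biUnion, Finset.mem_attach, true_and, Subtype.exists, Finset.mem_ssubsets]

lemma Stage.exists_isNext (hp : IdempotentUF p) (hpJ : MemPolyJ p)
    (hT : ∀ P ∈ T, IsPolyZeroConst P) (hB : ∀ K, B K ∈ p) (F : Finset (ℕ → ℕ))
    (g : ∀ F' : Finset (ℕ → ℕ), F' ⊂ F → Stage p T B) : ∃ d, Stage.IsNext F g d := by
  classical
  obtain ⟨S, hS⟩ := exists_finset_forall_mem_iff_of_ssubset fun F' hF' => (g F' hF').sums
  obtain ⟨N, hN⟩ := exists_finset_forall_mem_iff_of_ssubset fun F' hF' => (g F' hF').block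
  obtain ⟨L, hL⟩ := N.exists_nat_subset_range
  have hextendable : ∀ s ∈ F.powerset.image PartialSum.start ∪ S, ∀ P ∈ T,
      {y | s.value P + y ∈ star p (B s.base)} ∈ p := fun s hs P hP => by
    rcases Finset.mem_union.1 hs with hs | hs
    · obtain ⟨K, -, rfl⟩ := Finset.mem_image.1 hs
      simp only [PartialSum.value, PartialSum.start, (hT P hP).map_zero, zero_add]
      exact star_mem hp (hB K)
    · obtain ⟨F', hF', hs⟩ := (hS s).1 hs
      exact setOf_add_mem_star_mem hp ((g F' hF').value_mem_star s hs P hP)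
  obtain ⟨a, β, hβ_ne, hβL, hβ⟩ :=
    hpJ.exists_extend (B := fun K => star p (B K)) hT hextendable F L
  refine ⟨⟨a, β, Finset.image₂ (fun s f => s.extend a β f)
    (F.powerset.image PartialSum.start ∪ S) F, Finset.forall_mem_image₂.2 hβ⟩,
    hβ_ne, fun F' hF' x hx y hy => ?_, fun K hK f hf => ?_, fun F' hF' s hs f hf => ?_⟩
  · exact (Finset.mem_range.1 (hL ((hN x).2 ⟨F', hF', hx⟩))).trans_le (hβL y hy)
  · exact Finset.mem_image₂_of_mem (Finset.mem_union_left _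
      (Finset.mem_image_of_mem _ (Finset.mem_powerset.2 hK))) hf
  · exact Finset.mem_image₂_of_mem (Finset.mem_union_right _ ((hS s).2 ⟨F', hF', hs⟩)) hf

lemma exists_forall_of_wellFounded {X δ : Type*} {r : X → X → Prop} (wf : WellFounded r)
    {Q : (x : X) → ((y : X) → r y x → δ) → δ → Prop} (h : ∀ x g, ∃ d, Q x g d) :
    ∃ D : X → δ, ∀ x, Q x (fun y _ => D y) (D x) := by
  choose s hs using h
  refine ⟨wf.fix s, fun x => ?_⟩
  rw [wf.fix_eq]
  exact hs x _

/-- The functions `α` and `H` solve the one-dimensional problem for the family `B`, where `R F` is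
the finite set of partial sums along chains with last member `F`. -/
structure IsTower (T : Finset (ℕ → ℕ)) (B : Finset (ℕ → ℕ) → Set ℕ) (α : Finset (ℕ → ℕ) → ℕ)
    (H : Finset (ℕ → ℕ) → Finset ℕ) (R : Finset (ℕ → ℕ) → Finset PartialSum) : Prop where
  block_nonempty : ∀ F, (H F).Nonempty
  block_lt : ∀ F' F, F' ⊂ F → ∀ x ∈ H F', ∀ y ∈ H F, x < y
  value_mem : ∀ F, ∀ s ∈ R F, ∀ P ∈ T, s.value P ∈ B s.base
  start_extend_mem : ∀ F, ∀ K ⊆ F, ∀ f ∈ F, (PartialSum.start K).extend (α F) (H F) f ∈ R F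
  extend_mem : ∀ F' F, F' ⊂ F → ∀ s ∈ R F', ∀ f ∈ F, s.extend (α F) (H F) f ∈ R F

theorem exists_isTower (hp : IdempotentUF p) (hpJ : MemPolyJ p)
    (hT : ∀ P ∈ T, IsPolyZeroConst P) (hB : ∀ K, B K ∈ p) : ∃ α H R, IsTower T B α H R := by
  obtain ⟨D, hD⟩ := exists_forall_of_wellFounded
    (IsWellFounded.wf (r := fun F' F : Finset (ℕ → ℕ) => F' ⊂ F))
    (Stage.exists_isNext hp hpJ hT hB)
  exact ⟨fun F => (D F).shift, fun F => (D F).block, fun F => (D F).sums,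
    { block_nonempty := fun F => (hD F).block_nonempty
      block_lt := fun F' F hF => (hD F).block_lt F' hF
      value_mem := fun F s hs P hP => ((D F).value_mem_star s hs P hP).1
      start_extend_mem := fun F => (hD F).start_extend_mem
      extend_mem := fun F' F hF => (hD F).extend_mem F' hF }⟩

lemma IsTower.exists_mem {α : Finset (ℕ → ℕ) → ℕ} {H : Finset (ℕ → ℕ) → Finset ℕ}
    {R : Finset (ℕ → ℕ) → Finset PartialSum} (hR : IsTower T B α H R)
    {G : ℕ → Finset (ℕ → ℕ)} (hG : StrictMono G) {f : ℕ → ℕ → ℕ} (hf : ∀ i, f i ∈ G i)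
    {K : Finset (ℕ → ℕ)} {β : Finset ℕ} (hβ : β.Nonempty) (hK : ∀ i ∈ β, K ⊆ G i) :
    ∃ i ∈ β, ⟨K, ∑ i ∈ β, α (G i), ∑ i ∈ β, ∑ t ∈ H (G i), f i t⟩ ∈ R (G i) := by
  induction β using Finset.induction_on_max with
  | empty => exact absurd hβ Finset.not_nonempty_empty
  | insert a s hs ih =>
    have ha : a ∉ s := fun ha => (hs a ha).false
    refine ⟨a, Finset.mem_insert_self a s, ?_⟩
    rw [Finset.sum_insert ha, Finset.sum_insert ha, add_comm (α (G a)),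
      add_comm (∑ t ∈ H (G a), f a t)]
    obtain rfl | hs_ne := s.eq_empty_or_nonempty
    · exact hR.start_extend_mem (G a) K (hK a (Finset.mem_insert_self a _)) (f a) (hf a)
    · obtain ⟨i, hi, hmem⟩ := ih hs_ne fun i hi => hK i (Finset.mem_insert_of_mem hi)
      exact hR.extend_mem _ _ (hG (hs i hi)) _ hmem (f a) (hf a)

end Tower

section CentralSystem

/-- The functions `α` and `H` solve the `m`-dimensional problem for the family of targets `A`: terms
over a chain all of whose members contain `K` have to lie in `A K`. In the induction on `m`, `K` is
the last member of the chain used by the preceding coordinate. -/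
structure IsCentralSystem {m : ℕ} (T : Finset (ℕ → ℕ)) (A : Finset (ℕ → ℕ) → Set (Fin m → ℕ))
    (α : Fin m → Finset (ℕ → ℕ) → ℕ) (H : Fin m → Finset (ℕ → ℕ) → Finset ℕ) : Prop where
  block_nonempty : ∀ j F, (H j F).Nonempty
  block_lt : ∀ j F F', F ⊂ F' → ∀ x ∈ H j F, ∀ y ∈ H j F', x < y
  mem : ∀ G : ℕ → Finset (ℕ → ℕ), StrictMono G → ∀ f : ℕ → ℕ → ℕ, (∀ i, f i ∈ G i) →
    ∀ β : Fin m → Finset ℕ, (∀ l, (β l).Nonempty) →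
    (∀ l l', l < l' → ∀ x ∈ β l, ∀ y ∈ β l', x < y) →
    ∀ P : Fin m → ℕ → ℕ, (∀ l, P l ∈ T) → ∀ K, (∀ l, ∀ i ∈ β l, K ⊆ G i) →
    (fun l => ∑ i ∈ β l, α l (G i) + P l (∑ i ∈ β l, ∑ t ∈ H l (G i), f i t)) ∈ A K

variable {m : ℕ} {T : Finset (ℕ → ℕ)}

lemma IsCentralSystem.cons {A : Finset (ℕ → ℕ) → Set (Fin (m + 1) → ℕ)}
    {B : Finset (ℕ → ℕ) → Set ℕ} {α₀ : Finset (ℕ → ℕ) → ℕ} {H₀ : Finset (ℕ → ℕ) → Finset ℕ}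
    {R : Finset (ℕ → ℕ) → Finset PartialSum} (hR : IsTower T B α₀ H₀ R)
    {α : Fin m → Finset (ℕ → ℕ) → ℕ} {H : Fin m → Finset (ℕ → ℕ) → Finset ℕ}
    (h : IsCentralSystem T
      (fun F => ⋂ s ∈ R F, ⋂ P ∈ T, {v | (Fin.cons (s.value P) v : Fin (m + 1) → ℕ) ∈ A s.base})
      α H) :
    IsCentralSystem T A (Fin.cons α₀ α) (Fin.cons H₀ H) where
  block_nonempty := Fin.cases hR.block_nonempty h.block_nonempty
  block_lt := Fin.cases hR.block_lt h.block_lt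
  mem G hG f hf β hβ hβ_lt P hP K hK := by
    obtain ⟨i, hi, hmem⟩ := hR.exists_mem hG hf (hβ 0) (hK 0)
    have htail := h.mem G hG f hf (fun l => β l.succ) (fun l => hβ _)
      (fun l l' hl => hβ_lt _ _ (Fin.succ_lt_succ_iff.2 hl)) (fun l => P l.succ) (fun l => hP _)
      (G i) fun l k hk => (hG (hβ_lt 0 l.succ l.succ_pos i hi k hk)).le
    have hcons := mem_iInter₂.1 (mem_iInter₂.1 htail _ hmem) (P 0) (hP 0)
    convert! (show (Fin.cons _ _ : Fin (m + 1) → ℕ) ∈ A K from hcons) using 1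
    funext l
    cases l using Fin.cases <;> rfl

theorem exists_isCentralSystem (hT : ∀ P ∈ T, IsPolyZeroConst P) {p : Fin m → Ultrafilter ℕ}
    (hp : ∀ i, IdempotentUF (p i)) (hpJ : ∀ i, MemPolyJ (p i))
    {A : Finset (ℕ → ℕ) → Set (Fin m → ℕ)} (hA : ∀ K, A K ∈ tensor m p) :
    ∃ α H, IsCentralSystem T A α H := by
  induction m with
  | zero =>
    refine ⟨fun j => j.elim0, fun j => j.elim0, fun j => j.elim0, fun j => j.elim0, ?_⟩
    intro _ _ _ _ _ _ _ _ _ K _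
    rw [Subsingleton.elim (fun _ => _) fun i : Fin 0 => i.elim0]
    exact hA K
  | succ m ih =>
    obtain ⟨α₀, H₀, R, hR⟩ := exists_isTower (hp 0) (hpJ 0) hT
      (B := fun K => {x | {v | (Fin.cons x v : Fin (m + 1) → ℕ) ∈ A K} ∈
        tensor m fun i => p i.succ}) hA
    obtain ⟨α, H, h⟩ := ih (fun i => hp i.succ) (fun i => hpJ i.succ)
      (A := fun F => ⋂ s ∈ R F, ⋂ P ∈ T,
        {v | (Fin.cons (s.value P) v : Fin (m + 1) → ℕ) ∈ A s.base})
      fun F => (biInter_finset_mem _).2 fun s hs => (biInter_finset_mem _).2 fun P hP =>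
        hR.value_mem F s hs P hP
    exact ⟨_, _, h.cons hR⟩

end CentralSystem

theorem multidimensional_stronger_polynomial_CST_II_infinitary_general {m : ℕ}
    {p : Fin m → Ultrafilter ℕ} (hp : ∀ i, IdempotentUF (p i)) (hpJ : ∀ i, MemPolyJ (p i))
    {A : Set (Fin m → ℕ)} (hA : A ∈ tensor m p) {T : Finset (ℕ → ℕ)}
    (hT : ∀ P ∈ T, IsPolyZeroConst P) :
    ∃ (α : Fin m → Finset (ℕ → ℕ) → ℕ) (H : Fin m → Finset (ℕ → ℕ) → Finset ℕ),
      (∀ j F, (H j F).Nonempty) ∧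
      (∀ j F G, F ⊂ G → ∀ x ∈ H j F, ∀ y ∈ H j G, x < y) ∧
      ∀ G : ℕ → Finset (ℕ → ℕ), StrictMono G → ∀ f : ℕ → ℕ → ℕ, (∀ i, f i ∈ G i) →
        ∀ β : Fin m → Finset ℕ, (∀ l, (β l).Nonempty) →
          (∀ l l', l < l' → ∀ x ∈ β l, ∀ y ∈ β l', x < y) →
          ∀ P : Fin m → ℕ → ℕ, (∀ l, P l ∈ T) →
          (fun l => ∑ i ∈ β l, α l (G i) + P l (∑ i ∈ β l, ∑ t ∈ H l (G i), f i t)) ∈ A := by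
  obtain ⟨α, H, h⟩ := exists_isCentralSystem hT hp hpJ fun _ => hA
  exact ⟨α, H, h.block_nonempty, h.block_lt, fun G hG f hf β hβ hβ_lt P hP =>
    h.mem G hG f hf β hβ hβ_lt P hP ∅ fun _ _ _ => Finset.empty_subset _⟩

/-- Multidimensional Stronger Polynomial Central Sets Theorem II (infinitary form). -/
theorem multidimensional_stronger_polynomial_CST_II_infinitary (m : ℕ) (hm : 1 ≤ m)
    (p : Fin m → Ultrafilter ℕ) (hp : ∀ i, IsMinimalIdempotent (p i))
    (A : Set (Fin m → ℕ)) (hA : A ∈ tensor m p)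
    (T : Finset (ℕ → ℕ)) (hT : T.Nonempty) (hTP : ∀ P ∈ T, IsPolyZeroConst P) :
    ∃ (α : Fin m → Finset (ℕ → ℕ) → ℕ) (H : Fin m → Finset (ℕ → ℕ) → Finset ℕ),
      (∀ (j : Fin m) (F : Finset (ℕ → ℕ)), F.Nonempty → (H j F).Nonempty) ∧
      (∀ (j : Fin m) (F G : Finset (ℕ → ℕ)), F.Nonempty → F ⊂ G →
        ∀ x ∈ H j F, ∀ y ∈ H j G, x < y) ∧
      (∀ G : ℕ → Finset (ℕ → ℕ),
        (∀ i, (G i).Nonempty) → (∀ i j, i < j → G i ⊂ G j) →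
        ∀ f : ℕ → ℕ → ℕ, (∀ i, f i ∈ G i) →
        ∀ β : Fin m → Finset ℕ,
          (∀ l, (β l).Nonempty) →
          (∀ l l' : Fin m, l < l' → ∀ x ∈ β l, ∀ y ∈ β l', x < y) →
          ∀ P : Fin m → ℕ → ℕ, (∀ l, P l ∈ T) →
          (fun l => (∑ i ∈ β l, α l (G i)) +
              P l (∑ i ∈ β l, ∑ t ∈ H l (G i), f i t)) ∈ A) := by
  obtain ⟨α, H, hH, hlt, hmem⟩ := multidimensional_stronger_polynomial_CST_II_infinitary_general
    (fun i => (hp i).1) (fun i => (hp i).memPolyJ) hA hTP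
  exact ⟨α, H, fun j F _ => hH j F, fun j F G _ => hlt j F G,
    fun G _ hG => hmem G fun i k => hG i k⟩

end MultiCST
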